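/- Over Σ = {a, b}, consider the DWAs A₁ with states {q_0, q_1}, initial state q_0, δ₁(q_0, x) = q_1 and δ₁(q_1, x) = q_1 for both letters x, weights c₁(q_0, a) = −1, c₁(q_0, b) = 2, c₁(q_1, x) = 2; and A₂ with states {q_0, q_1}, initial state q_0, δ₂(q_0, a) = q_1, δ₂(q_0, b) = q_0, δ₂(q_1, x) = q_1, weights c₂(q_0, a) = −1, c₂(q_0, b) = 2, c₂(q_1, x) = 2. Then: (1) for every nonempty word w over {a, b}, A₁(w) > 0 ⟺ A₂(w) > 0 ⟺ w ≠ a; (2) there is no DWA B over {a, b} with a single state such that for every nonempty word w, B(w) > 0 ⟺ w ≠ a; (3) A₁ and A₂ are not isomorphic, i.e., there is no bijection between their state sets mapping initial state to initial state and preserving both the transition function and the weight function. Hence minimal-size binary PODWA need not be unique up to isomorphism. -/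

import Mathlib

/-- A deterministic weighted automaton (DWA) over alphabet `A` with state space `Q`. -/
structure DWA (A : Type) (Q : Type) where
  init : Q
  δ : Q → A → Q
  c : Q → A → ℤ

/-- The extended transition function `δ̂`. -/
def DWA.run {A Q : Type} (M : DWA A Q) (q : Q) (w : List A) : Q :=
  w.foldl M.δ q

/-- The accumulated weight of the run on `w` starting in state `q`. -/
def DWA.valFrom {A Q : Type} (M : DWA A Q) : Q → List A → ℤ
  | _, [] => 0
  | q, x :: w => M.c q x + M.valFrom (M.δ q x) w

/-- The value `A(w)` of a word: the sum of the weights along the run from the initial state. -/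
def DWA.val {A Q : Type} (M : DWA A Q) (w : List A) : ℤ :=
  M.valFrom M.init w

/-- The two-letter alphabet `{a, b}`. -/
inductive AB where
  | a : AB
  | b : AB
deriving DecidableEq

/-- the two 2-state DWAs `A₁` and `A₂` (states modelled by `Bool`, with
`q_0 = false`, `q_1 = true`) are observationally equivalent — both accept exactly the
nonempty words different from `a` — and minimal (no single-state DWA is equivalent), yet not
isomorphic. Hence minimal-size binary PODWA need not be unique up to isomorphism. -/
theorem minimal_podwa_not_unique :
    let A₁ : DWA AB Bool :=
      ⟨false, fun _ _ => true,
        fun q x => if q then 2 else (match x with | AB.a => -1 | AB.b => 2)⟩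
    let A₂ : DWA AB Bool :=
      ⟨false, fun q x => if q then true else (match x with | AB.a => true | AB.b => false),
        fun q x => if q then 2 else (match x with | AB.a => -1 | AB.b => 2)⟩
    (∀ w : List AB, w ≠ [] →
        ((0 < A₁.val w ↔ w ≠ [AB.a]) ∧ (0 < A₂.val w ↔ w ≠ [AB.a]))) ∧
    (¬ ∃ B : DWA AB Unit, ∀ w : List AB, w ≠ [] → (0 < B.val w ↔ w ≠ [AB.a])) ∧
    (¬ ∃ g : Bool → Bool, Function.Bijective g ∧
        g A₁.init = A₂.init ∧
        (∀ q x, g (A₁.δ q x) = A₂.δ (g q) x) ∧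
        (∀ q x, A₁.c q x = A₂.c (g q) x)) := by
  intro A₁ A₂
  have h1 : ∀ w : List AB, A₁.valFrom true w = 2 * (w.length : ℤ) := by
    intro w
    induction w with
    | nil => simp [DWA.valFrom]
    | cons x w ih =>
      have e : A₁.valFrom true (x :: w) = 2 + A₁.valFrom true w := rfl
      rw [e, ih]; push_cast [List.length_cons]; ring
  have h2 : ∀ w : List AB, A₂.valFrom true w = 2 * (w.length : ℤ) := by
    intro w
    induction w with
    | nil => simp [DWA.valFrom]
    | cons x w ih =>
      have e : A₂.valFrom true (x :: w) = 2 + A₂.valFrom true w := rfl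
      rw [e, ih]; push_cast [List.length_cons]; ring
  have h1a : ∀ w, A₁.val (AB.a :: w) = -1 + A₁.valFrom true w := fun _ => rfl
  have h1b : ∀ w, A₁.val (AB.b :: w) = 2 + A₁.valFrom true w := fun _ => rfl
  have h2a : ∀ w, A₂.val (AB.a :: w) = -1 + A₂.valFrom true w := fun _ => rfl
  have h2b : ∀ w, A₂.val (AB.b :: w) = 2 + A₂.val w := fun _ => rfl
  have h3 : ∀ w : List AB, -1 ≤ A₂.val w := by
    intro w
    induction w with
    | nil => simp [DWA.val, DWA.valFrom]
    | cons x w ih =>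
      cases x
      · rw [h2a, h2]; omega
      · rw [h2b]; omega
  refine ⟨?_, ?_, ?_⟩
  · intro w hw
    match w, hw with
    | [AB.a], _ =>
      rw [h1a, h2a, h1, h2]; simp
    | AB.a :: y :: w, _ =>
      rw [h1a, h2a, h1, h2]
      have hne : AB.a :: y :: w ≠ [AB.a] := by simp
      simp only [List.length_cons]
      push_cast
      exact ⟨iff_of_true (by omega) hne, iff_of_true (by omega) hne⟩
    | AB.b :: w, _ =>
      rw [h1b, h2b, h1]
      have hne : AB.b :: w ≠ [AB.a] := by simp
      have := h3 w
      exact ⟨iff_of_true (by omega) hne, iff_of_true (by omega) hne⟩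
  · rintro ⟨B, hB⟩
    have e1 := hB [AB.a] (by simp)
    have e2 := (hB [AB.a, AB.a] (by simp)).2 (by simp)
    have f1 : B.val [AB.a] = B.c () AB.a + 0 := rfl
    have f2 : B.val [AB.a, AB.a] = B.c () AB.a + (B.c () AB.a + 0) := rfl
    have e3 : ¬ 0 < B.val [AB.a] := fun h => e1.1 h rfl
    omega
  · rintro ⟨g, hg, hi, hd, -⟩
    have hi' : g false = false := hi
    have h := hd false AB.b
    have h' : g true = A₂.δ (g false) AB.b := h
    rw [hi'] at h'
    have h'' : g true = false := h'
    exact absurd (hg.1 (h''.trans hi'.symm)) (by simp)
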